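/- ∑_{k=1}^∞ (−1)^k (216/49)^k / (k² · C(3k,k)) = 6·arctan²(√3/5) − (1/2)·(log 7)². -/

import Mathlib

open Real

/-!
The Beta integral gives `1 / (n * C(3n, n)) = 2/3 * ∫₀¹ x^(n-1) * (1 - x)^(2n-1) dx`, so the
derivative of `S(y) = ∑ yⁿ / (n² * C(3n, n))` is `2/3 * ∫₀¹ (1 - x) / (1 - y x (1 - x)²) dx`. For
`y = -27 w³ / (1 - w³)²` the cubic denominator is, up to the factor `(1 - w³)²`, the product of
`3 ζ w x + (1 - ζ w)²` over the cube roots of unity `ζ`, and the integral becomes a combination of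
the real and imaginary parts of `log (1 - ζ w)`. The derivative of `S(y(w))` is then that of a
quadratic form in these logarithms; both functions vanish at `w = 0`, and `w = 1/2` gives
`y = -216/49`.
-/

open Set

section BetaIntegral

lemma integral_pow_mul_one_sub_pow (a b : ℕ) :
    ∫ x in (0 : ℝ)..1, x ^ a * (1 - x) ^ b = a.factorial * b.factorial / (a + b + 1).factorial := by
  have hbeta : ((∫ x in (0 : ℝ)..1, x ^ a * (1 - x) ^ b : ℝ) : ℂ) =
      Complex.betaIntegral (a + 1) (b + 1) := by
    rw [← intervalIntegral.integral_ofReal, Complex.betaIntegral]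
    simp
  have hre (n : ℕ) : 0 < (n + 1 : ℂ).re := by
    simpa only [Complex.add_re, Complex.natCast_re, Complex.one_re] using n.cast_add_one_pos
  have hgamma : Complex.betaIntegral (a + 1) (b + 1) =
      a.factorial * b.factorial / (a + b + 1).factorial := by
    rw [Complex.betaIntegral_eq_Gamma_mul_div _ _ (hre a) (hre b),
      show (a + 1 + (b + 1) : ℂ) = (a + b + 1 : ℕ) + 1 by push_cast; ring]
    simp only [Complex.Gamma_nat_eq_factorial]
  apply Complex.ofReal_injective
  push_cast
  exact hbeta.trans hgamma

lemma integral_one_sub_mul_pow (y : ℝ) (k : ℕ) :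
    ∫ x in (0 : ℝ)..1, (1 - x) * (y * (x * (1 - x) ^ 2)) ^ k =
      3 / 2 * (y ^ k / ((k + 1) * ((3 * (k + 1)).choose (k + 1) : ℕ))) := by
  have hmonomial (x : ℝ) : (1 - x) * (y * (x * (1 - x) ^ 2)) ^ k =
      y ^ k * (x ^ k * (1 - x) ^ (2 * k + 1)) := by
    rw [mul_pow, mul_pow, ← pow_mul]; ring
  simp_rw [hmonomial]
  rw [intervalIntegral.integral_const_mul, integral_pow_mul_one_sub_pow,
    Nat.cast_choose ℝ (by lia : k + 1 ≤ 3 * (k + 1)),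
    show 3 * (k + 1) - (k + 1) = (2 * k + 1) + 1 by lia,
    show 3 * (k + 1) = (k + (2 * k + 1) + 1) + 1 by lia]
  simp only [Nat.factorial_succ (k + (2 * k + 1) + 1), Nat.factorial_succ (2 * k + 1),
    Nat.factorial_succ k]
  push_cast
  field_simp
  ring

end BetaIntegral

section Series

variable {x y : ℝ}

lemma mul_one_sub_sq_le (hx : x ≤ 4 / 3) : x * (1 - x) ^ 2 ≤ 4 / 27 := by
  nlinarith [mul_nonneg (sq_nonneg (3 * x - 1)) (by linarith : 0 ≤ 4 - 3 * x)]

lemma abs_mul_mul_one_sub_sq_le (y : ℝ) (hx : x ∈ Icc (0 : ℝ) 1) :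
    |y * (x * (1 - x) ^ 2)| ≤ 4 / 27 * |y| := by
  rw [abs_mul, abs_of_nonneg (mul_nonneg hx.1 (sq_nonneg _)), mul_comm]
  gcongr
  exact mul_one_sub_sq_le (by linarith [hx.2])

lemma norm_one_sub_mul_pow_le (y : ℝ) (k : ℕ) (hx : x ∈ Icc (0 : ℝ) 1) :
    ‖(1 - x) * (y * (x * (1 - x) ^ 2)) ^ k‖ ≤ (4 / 27 * |y|) ^ k := by
  rw [norm_mul, norm_pow, norm_eq_abs, norm_eq_abs, abs_of_nonneg (sub_nonneg.2 hx.2)]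
  calc (1 - x) * |y * (x * (1 - x) ^ 2)| ^ k ≤ 1 * (4 / 27 * |y|) ^ k := by
        gcongr
        · linarith [hx.1]
        · exact abs_mul_mul_one_sub_sq_le y hx
    _ = (4 / 27 * |y|) ^ k := one_mul _

lemma abs_pow_div_mul_choose_le (y : ℝ) (k : ℕ) :
    |y ^ k / ((k + 1) * ((3 * (k + 1)).choose (k + 1) : ℕ))| ≤ (4 / 27 * |y|) ^ k := by
  have hint := intervalIntegral.norm_integral_le_of_norm_le_const (a := (0 : ℝ)) (b := 1)
    (f := fun x ↦ (1 - x) * (y * (x * (1 - x) ^ 2)) ^ k) (C := (4 / 27 * |y|) ^ k) fun x hx ↦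
      norm_one_sub_mul_pow_le y k (Ioc_subset_Icc_self (by rwa [uIoc_of_le zero_le_one] at hx))
  rw [integral_one_sub_mul_pow, norm_mul, norm_eq_abs, norm_eq_abs, abs_of_pos (by norm_num),
    sub_zero, abs_one, mul_one] at hint
  linarith [abs_nonneg (y ^ k / ((k + 1) * ((3 * (k + 1)).choose (k + 1) : ℕ)))]

lemma summable_pow_mul_abs (hy : |y| < 27 / 4) : Summable fun k : ℕ ↦ (4 / 27 * |y|) ^ k :=
  summable_geometric_of_lt_one (by positivity) (by linarith)

lemma hasSum_pow_div_mul_choose (hy : |y| < 27 / 4) :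
    HasSum (fun k : ℕ ↦ y ^ k / ((k + 1) * ((3 * (k + 1)).choose (k + 1) : ℕ)))
      (2 / 3 * ∫ x in (0 : ℝ)..1, (1 - x) / (1 - y * (x * (1 - x) ^ 2))) := by
  have hterm (k : ℕ) : y ^ k / ((k + 1) * ((3 * (k + 1)).choose (k + 1) : ℕ)) =
      2 / 3 * ∫ x in (0 : ℝ)..1, (1 - x) * (y * (x * (1 - x) ^ 2)) ^ k := by
    rw [integral_one_sub_mul_pow]; ring
  simp only [hterm]
  have hIcc {x : ℝ} (hx : x ∈ uIoc (0 : ℝ) 1) : x ∈ Icc (0 : ℝ) 1 :=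
    Ioc_subset_Icc_self (by rwa [uIoc_of_le zero_le_one] at hx)
  refine .mul_left (2 / 3) ?_
  refine intervalIntegral.hasSum_integral_of_dominated_convergence
    (fun k _ ↦ (4 / 27 * |y|) ^ k) (fun k ↦ ?_) (fun k ↦ ?_) ?_ ?_ ?_
  · exact Continuous.aestronglyMeasurable (by fun_prop)
  · exact .of_forall fun x hx ↦ norm_one_sub_mul_pow_le y k (hIcc hx)
  · exact .of_forall fun _ _ ↦ summable_pow_mul_abs hy
  · exact intervalIntegrable_const
  · refine .of_forall fun x hx ↦ ?_
    rw [div_eq_mul_inv]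
    have hratio : |y * (x * (1 - x) ^ 2)| < 1 :=
      (abs_mul_mul_one_sub_sq_le y (hIcc hx)).trans_lt (by linarith)
    exact HasSum.mul_left (1 - x) (hasSum_geometric_of_abs_lt_one hratio)

lemma summable_pow_succ_div_sq_mul_choose (hy : |y| < 27 / 4) :
    Summable fun k : ℕ ↦
      y ^ (k + 1) / ((k + 1 : ℝ) ^ 2 * ((3 * (k + 1)).choose (k + 1) : ℕ)) := by
  refine .of_norm_bounded ((summable_pow_mul_abs hy).mul_left |y|) fun k ↦ ?_
  have hsplit : y ^ (k + 1) / ((k + 1 : ℝ) ^ 2 * ((3 * (k + 1)).choose (k + 1) : ℕ)) =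
      y / (k + 1) * (y ^ k / ((k + 1) * ((3 * (k + 1)).choose (k + 1) : ℕ))) := by
    rw [div_mul_div_comm]; ring
  rw [hsplit, norm_mul, norm_eq_abs, norm_eq_abs, abs_div, abs_of_pos (k.cast_add_one_pos (α := ℝ))]
  gcongr
  · exact div_le_self (abs_nonneg y) (by simp)
  · exact abs_pow_div_mul_choose_le y k

/-- The function `∑_{n ≥ 1} yⁿ / (n² * C(3n, n))`, indexed by `n = k + 1`. -/
noncomputable def chooseSeries (y : ℝ) : ℝ :=
  ∑' k : ℕ, y ^ (k + 1) / ((k + 1 : ℝ) ^ 2 * ((3 * (k + 1)).choose (k + 1) : ℕ))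

lemma chooseSeries_zero : chooseSeries 0 = 0 := by simp [chooseSeries]

lemma hasDerivAt_chooseSeries (hy : |y| < 27 / 4) :
    HasDerivAt chooseSeries
      (2 / 3 * ∫ x in (0 : ℝ)..1, (1 - x) / (1 - y * (x * (1 - x) ^ 2))) y := by
  obtain ⟨r, hyr, hr⟩ := exists_between hy
  have hr_nonneg : 0 ≤ r := (abs_nonneg y).trans hyr.le
  rw [← (hasSum_pow_div_mul_choose hy).tsum_eq]
  refine hasDerivAt_tsum_of_isPreconnected (t := Ioo (-r) r) (u := fun k ↦ (4 / 27 * |r|) ^ k)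
    (g := fun (k : ℕ) z ↦
      z ^ (k + 1) / ((k + 1 : ℝ) ^ 2 * ((3 * (k + 1)).choose (k + 1) : ℕ)))
    (g' := fun (k : ℕ) z ↦ z ^ k / ((k + 1) * ((3 * (k + 1)).choose (k + 1) : ℕ)))
    (summable_pow_mul_abs (by rwa [abs_of_nonneg hr_nonneg])) isOpen_Ioo isPreconnected_Ioo
    (fun k z _ ↦ ?_) (fun k z hz ↦ ?_) (abs_lt.1 hyr)
    (summable_pow_succ_div_sq_mul_choose hy) (abs_lt.1 hyr)
  · have hchoose : ((3 * (k + 1)).choose (k + 1) : ℝ) ≠ 0 := by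
      exact_mod_cast (Nat.choose_pos (by lia)).ne'
    convert! (hasDerivAt_pow (k + 1) z).div_const _ using 1
    push_cast
    field_simp
  · refine (abs_pow_div_mul_choose_le z k).trans ?_
    rw [abs_of_nonneg hr_nonneg]
    gcongr
    exact (abs_lt.2 hz).le

end Series

section CubicFactors

variable {w x : ℝ}

/-- The real linear factor of `27 w³ x (1 - x)² + (1 - w³)²`, viewed as a polynomial in `x`. The
three complex factors are `3 ζ w x + (1 - ζ w)²` for `ζ³ = 1`, and this is the one with `ζ = 1`. -/
def linFactor (w x : ℝ) : ℝ := 3 * w * x + (1 - w) ^ 2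

/-- The real quadratic factor of `27 w³ x (1 - x)² + (1 - w³)²`, viewed as a polynomial in `x`: the
product of the factors `3 ζ w x + (1 - ζ w)²` over the two primitive cube roots of unity `ζ`. -/
def quadFactor (w x : ℝ) : ℝ :=
  9 * w ^ 2 * x ^ 2 - 3 * w * (1 + 4 * w + w ^ 2) * x + (1 + w + w ^ 2) ^ 2

lemma linFactor_mul_quadFactor (w x : ℝ) :
    linFactor w x * quadFactor w x = (1 - w ^ 3) ^ 2 + 27 * w ^ 3 * (x * (1 - x) ^ 2) := by
  simp only [linFactor, quadFactor]; ring

lemma four_mul_quadFactor (w x : ℝ) :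
    4 * quadFactor w x = (6 * w * x - (1 + 4 * w + w ^ 2)) ^ 2 + 3 * (1 - w ^ 2) ^ 2 := by
  simp only [quadFactor]; ring

lemma linFactor_zero (w : ℝ) : linFactor w 0 = (1 - w) ^ 2 := by simp [linFactor]

lemma linFactor_one (w : ℝ) : linFactor w 1 = 1 + w + w ^ 2 := by simp only [linFactor]; ring

lemma quadFactor_zero (w : ℝ) : quadFactor w 0 = (1 + w + w ^ 2) ^ 2 := by simp [quadFactor]

lemma quadFactor_one (w : ℝ) : quadFactor w 1 = (1 - w) ^ 2 * (1 + w + w ^ 2) := by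
  simp only [quadFactor]; ring

lemma one_add_add_sq_pos (w : ℝ) : 0 < 1 + w + w ^ 2 := by nlinarith [sq_nonneg (1 + w)]

lemma one_sub_add_sq_pos (w : ℝ) : 0 < 1 - w + w ^ 2 := by nlinarith [sq_nonneg (1 - w)]

lemma one_sub_cube_pos (hw : w < 1) : 0 < 1 - w ^ 3 := by
  rw [show 1 - w ^ 3 = (1 - w) * (1 + w + w ^ 2) by ring]
  exact mul_pos (sub_pos.2 hw) (one_add_add_sq_pos w)

lemma one_sub_sq_pos (hw : w ∈ Ioo (-1) 1) : 0 < 1 - w ^ 2 := by nlinarith [hw.1, hw.2]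

lemma linFactor_pos (hw : w < 1) (hx : x ∈ Icc (0 : ℝ) 1) : 0 < linFactor w x := by
  have hconvex : linFactor w x = (1 - x) * (1 - w) ^ 2 + x * (1 + w + w ^ 2) := by
    simp only [linFactor]; ring
  rw [hconvex]
  exact convex_Ioi (0 : ℝ) (pow_pos (sub_pos.2 hw) 2) (one_add_add_sq_pos w)
    (sub_nonneg.2 hx.2) hx.1 (by ring)

lemma quadFactor_pos (hw : w ∈ Ioo (-1) 1) (x : ℝ) : 0 < quadFactor w x := by
  have hsq := one_sub_sq_pos hw
  have hfour : 0 < 4 * quadFactor w x := by rw [four_mul_quadFactor]; positivity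
  linarith

lemma hasDerivAt_linFactor (w x : ℝ) : HasDerivAt (linFactor w) (3 * w) x := by
  convert! ((hasDerivAt_id x).const_mul (3 * w)).add_const ((1 - w) ^ 2) using 1
  simp

lemma hasDerivAt_quadFactor (w x : ℝ) :
    HasDerivAt (quadFactor w) (3 * w * (6 * w * x - (1 + 4 * w + w ^ 2))) x := by
  convert! (((hasDerivAt_pow 2 x).const_mul (9 * w ^ 2)).sub
    ((hasDerivAt_id x).const_mul (3 * w * (1 + 4 * w + w ^ 2)))).add_const
      ((1 + w + w ^ 2) ^ 2) using 1
  simp only [Nat.cast_ofNat, Nat.add_one_sub_one, pow_one, mul_one]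
  ring

lemma hasDerivAt_arctan_quadFactor (hw : w ∈ Ioo (-1) 1) (x : ℝ) :
    HasDerivAt (fun x ↦ arctan ((6 * w * x - (1 + 4 * w + w ^ 2)) / (√3 * (1 - w ^ 2))))
      (3 / 2 * (√3 * w * (1 - w ^ 2)) / quadFactor w x) x := by
  have hsq := one_sub_sq_pos hw
  have hquad := quadFactor_pos hw x
  have hlin : HasDerivAt (fun x ↦ 6 * w * x - (1 + 4 * w + w ^ 2)) (6 * w) x := by
    simpa using ((hasDerivAt_id x).const_mul (6 * w)).sub_const (1 + 4 * w + w ^ 2)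
  have hone_add : 1 + ((6 * w * x - (1 + 4 * w + w ^ 2)) / (√3 * (1 - w ^ 2))) ^ 2 =
      4 * quadFactor w x / (3 * (1 - w ^ 2) ^ 2) := by
    rw [four_mul_quadFactor, div_pow, mul_pow, sq_sqrt (by norm_num)]
    field_simp
    ring
  convert! (hlin.div_const (√3 * (1 - w ^ 2))).arctan using 1
  rw [hone_add]
  field_simp
  rw [sq_sqrt (by norm_num)]
  ring

lemma hasDerivAt_log_factors_sub_arctan (hw : w ∈ Ioo (-1) 1) (hx : x ∈ Icc (0 : ℝ) 1) :
    HasDerivAt (fun x ↦ log (linFactor w x) - 1 / 2 * log (quadFactor w x)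
        - √3 * (1 - w) / (1 + w) *
          arctan ((6 * w * x - (1 + 4 * w + w ^ 2)) / (√3 * (1 - w ^ 2))))
      (27 * w ^ 2 * (1 - w + w ^ 2) * ((1 - x) / (linFactor w x * quadFactor w x))) x := by
  have hlin := linFactor_pos hw.2 hx
  have hquad := quadFactor_pos hw x
  have hadd : 0 < 1 + w := by linarith [hw.1]
  convert! (((hasDerivAt_linFactor w x).log hlin.ne').sub
    (((hasDerivAt_quadFactor w x).log hquad.ne').const_mul (1 / 2))).sub
      ((hasDerivAt_arctan_quadFactor hw x).const_mul (√3 * (1 - w) / (1 + w))) using 1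
  have hpartial : 27 * w ^ 2 * (1 - w + w ^ 2) * (1 - x) = 3 * w * quadFactor w x
      - 3 / 2 * w * (6 * w * x - (1 + 4 * w + w ^ 2) + 3 * (1 - w) ^ 2) * linFactor w x := by
    simp only [linFactor, quadFactor]; ring
  rw [mul_div_assoc', hpartial]
  field_simp
  rw [sq_sqrt (by norm_num)]
  ring

lemma intervalIntegrable_one_sub_div_factors (hw : w ∈ Ioo (-1) 1) :
    IntervalIntegrable (fun x ↦ (1 - x) / (linFactor w x * quadFactor w x))
      MeasureTheory.volume 0 1 := by
  refine ContinuousOn.intervalIntegrable ?_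
  rw [uIcc_of_le zero_le_one]
  refine .div (by fun_prop) (by unfold linFactor quadFactor; fun_prop) fun x hx ↦ ?_
  exact (mul_pos (linFactor_pos hw.2 hx) (quadFactor_pos hw x)).ne'

/-- Twice the logarithm of `|1 - ζ w| / |1 - w|` for a primitive cube root of unity `ζ`. -/
noncomputable def cubeRootLog (w : ℝ) : ℝ := log ((1 + w + w ^ 2) / (1 - w) ^ 2)

/-- The argument of `1 - ζ w` for the cube root of unity `ζ = exp (-2 π i / 3)`. -/
noncomputable def cubeRootArg (w : ℝ) : ℝ := arctan (√3 * w / (2 + w))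

lemma hasDerivAt_cubeRootLog (hw : w < 1) :
    HasDerivAt cubeRootLog (3 * (1 + w) / (1 - w ^ 3)) w := by
  have hsub : 0 < 1 - w := sub_pos.2 hw
  have hadd := one_add_add_sq_pos w
  have hnum : HasDerivAt (fun w : ℝ ↦ 1 + w + w ^ 2) (1 + 2 * w) w := by
    convert! ((hasDerivAt_id w).const_add 1).add (hasDerivAt_pow 2 w) using 1
    simp
  have hden : HasDerivAt (fun w : ℝ ↦ (1 - w) ^ 2) (-(2 * (1 - w))) w := by
    convert! ((hasDerivAt_id w).const_sub 1).pow 2 using 1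
    simp
  convert! (hnum.div hden (by positivity)).log (by simp only [Pi.div_apply]; positivity) using 1
  simp only [Pi.div_apply]
  rw [show 1 - w ^ 3 = (1 - w) * (1 + w + w ^ 2) by ring]
  field_simp
  ring

lemma hasDerivAt_cubeRootArg (hw : w ≠ -2) :
    HasDerivAt cubeRootArg (√3 / (2 * (1 + w + w ^ 2))) w := by
  have hden : 2 + w ≠ 0 := fun h ↦ hw (by linarith)
  have hone_add : 1 + (√3 * w / (2 + w)) ^ 2 = 4 * (1 + w + w ^ 2) / (2 + w) ^ 2 := by
    rw [div_pow, mul_pow, sq_sqrt (by norm_num)]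
    field_simp
    ring
  convert! (((hasDerivAt_id w).const_mul √3).div ((hasDerivAt_id w).const_add 2) hden).arctan
    using 1
  simp only [Pi.div_apply, id]
  rw [hone_add]
  have hpos := one_add_add_sq_pos w
  field_simp
  ring

lemma arctan_div_sqrt_three_add_cubeRootArg {a : ℝ} (hw : -2 < w) (ha : a * w < 2 + w) :
    arctan (a / √3) + cubeRootArg w = arctan ((a * (2 + w) + 3 * w) / (√3 * (2 + w - a * w))) := by
  have hden : 0 < 2 + w := by linarith
  have hsub : 0 < 2 + w - a * w := sub_pos.2 ha
  have hprod : a / √3 * (√3 * w / (2 + w)) = a * w / (2 + w) := by field_simp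
  rw [cubeRootArg, arctan_add (by rwa [hprod, div_lt_one hden]), hprod, one_sub_div hden.ne']
  congr 1
  field_simp
  rw [sq_sqrt (by norm_num)]
  ring

/- Adding `cubeRootArg w` three times moves from one value to the other through
`arctan (1 / √3)` and `arctan ((1 + 2 * w) / √3)`. At each step the product of the two tangents is
less than `1`, so the addition formula holds without a multiple of `π`. -/
lemma arctan_sub_arctan_eq_three_mul_cubeRootArg (hw : w ∈ Ioo (-1) 1) :
    arctan ((1 + 4 * w + w ^ 2) / (√3 * (1 - w ^ 2))) - arctan ((1 - w) / (√3 * (1 + w))) =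
      3 * cubeRootArg w := by
  have hw_gt : -2 < w := by linarith [hw.1]
  have hadd : 0 < 1 + w := by linarith [hw.1]
  have hsq := one_sub_sq_pos hw
  have hpos := one_add_add_sq_pos w
  have hfirst : arctan ((1 - w) / (√3 * (1 + w))) + cubeRootArg w = arctan (1 / √3) := by
    rw [mul_comm, ← div_div, arctan_div_sqrt_three_add_cubeRootArg hw_gt]
    · have hden : 2 + w - (1 - w) / (1 + w) * w = 2 * (1 + w + w ^ 2) / (1 + w) := by
        field_simp
        ring
      rw [hden]
      congr 1
      field_simp
      ring
    · rw [div_mul_eq_mul_div, div_lt_iff₀ hadd]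
      linarith
  have hsecond : arctan (1 / √3) + cubeRootArg w = arctan ((1 + 2 * w) / √3) := by
    rw [arctan_div_sqrt_three_add_cubeRootArg hw_gt (by linarith)]
    congr 1
    field_simp
    ring
  have hthird : arctan ((1 + 2 * w) / √3) + cubeRootArg w =
      arctan ((1 + 4 * w + w ^ 2) / (√3 * (1 - w ^ 2))) := by
    rw [arctan_div_sqrt_three_add_cubeRootArg hw_gt (by linarith),
      show 2 + w - (1 + 2 * w) * w = 2 * (1 - w ^ 2) by ring]
    congr 1
    field_simp
    ring
  linear_combination -hfirst - hsecond - hthird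

lemma mul_integral_one_sub_div_factors (hw : w ∈ Ioo (-1) 1) :
    27 * w ^ 2 * (1 - w + w ^ 2) *
        ∫ x in (0 : ℝ)..1, (1 - x) / (linFactor w x * quadFactor w x) =
      3 / 2 * cubeRootLog w - 3 * √3 * (1 - w) / (1 + w) * cubeRootArg w := by
  have hsub : 0 < 1 - w := sub_pos.2 hw.2
  have hadd : 0 < 1 + w := by linarith [hw.1]
  have hpos := one_add_add_sq_pos w
  have harg_zero : (6 * w * 0 - (1 + 4 * w + w ^ 2)) / (√3 * (1 - w ^ 2)) =
      -((1 + 4 * w + w ^ 2) / (√3 * (1 - w ^ 2))) := by ring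
  have harg_one : (6 * w * 1 - (1 + 4 * w + w ^ 2)) / (√3 * (1 - w ^ 2)) =
      -((1 - w) / (√3 * (1 + w))) := by
    rw [show 1 - w ^ 2 = (1 - w) * (1 + w) by ring]
    field_simp
    ring
  rw [← intervalIntegral.integral_const_mul,
    intervalIntegral.integral_eq_sub_of_hasDerivAt
      (fun x hx ↦ hasDerivAt_log_factors_sub_arctan hw (by rwa [uIcc_of_le zero_le_one] at hx))
      ((intervalIntegrable_one_sub_div_factors hw).const_mul _),
    linFactor_zero, linFactor_one, quadFactor_zero, quadFactor_one, harg_zero, harg_one,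
    arctan_neg, arctan_neg,
    log_mul (by positivity) hpos.ne', log_pow, log_pow, cubeRootLog,
    log_div hpos.ne' (by positivity), log_pow]
  push_cast
  linear_combination
    -(√3 * (1 - w) / (1 + w)) * arctan_sub_arctan_eq_three_mul_cubeRootArg hw

end CubicFactors

section Parametrisation

variable {w : ℝ}

/-- The argument of the series in terms of the parameter `w`: this substitution makes the
denominator `1 - y x (1 - x)²` of the integrand a product of explicit linear and quadratic
factors in `x`. -/
noncomputable def cubeRootParam (w : ℝ) : ℝ := -(27 * w ^ 3 / (1 - w ^ 3) ^ 2)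

lemma lt_one_of_cube_lt (hw₁ : w ^ 3 < 3 - 2 * √2) : w < 1 := by
  have hsqrt : 1 < √2 := Real.one_lt_sqrt_two
  refine (Odd.strictMono_pow (R := ℝ) (n := 3) (by decide)).lt_iff_lt.1 ?_
  linarith

-- `3 - 2 * √2` is the smaller root of `(1 - t) ^ 2 = 4 * t`.
lemma abs_cubeRootParam_lt (hw₀ : -1 < w) (hw₁ : w ^ 3 < 3 - 2 * √2) :
    |cubeRootParam w| < 27 / 4 := by
  have hcube : -1 < w ^ 3 := by
    linarith [Odd.strictMono_pow (R := ℝ) (n := 3) (by decide) hw₀]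
  have hsqrt : 1 < √2 := Real.one_lt_sqrt_two
  have hone_sub : 0 < 1 - w ^ 3 := by linarith
  have hlarge : 4 * w ^ 3 < (1 - w ^ 3) ^ 2 := by
    nlinarith [sq_sqrt (show (0 : ℝ) ≤ 2 by norm_num)]
  have hsmall : -(4 * w ^ 3) < (1 - w ^ 3) ^ 2 := by nlinarith
  rw [cubeRootParam, abs_neg, abs_div, abs_of_pos (pow_pos hone_sub 2),
    div_lt_iff₀ (pow_pos hone_sub 2), abs_lt]
  constructor <;> linarith

lemma hasDerivAt_cubeRootParam (hw : w < 1) :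
    HasDerivAt cubeRootParam (-(81 * w ^ 2 * (1 + w ^ 3) / (1 - w ^ 3) ^ 3)) w := by
  have hcube := one_sub_cube_pos hw
  convert! (((hasDerivAt_pow 3 w).const_mul 27).div
    (((hasDerivAt_pow 3 w).const_sub 1).pow 2) (pow_ne_zero 2 hcube.ne')).neg using 1
  simp only [Nat.cast_ofNat, Nat.add_one_sub_one, Pi.pow_apply, pow_one, mul_neg, sub_neg_eq_add,
    neg_inj]
  field_simp
  ring

lemma one_sub_cubeRootParam_mul (hw : w < 1) (x : ℝ) :
    1 - cubeRootParam w * (x * (1 - x) ^ 2) =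
      linFactor w x * quadFactor w x / (1 - w ^ 3) ^ 2 := by
  have hcube := one_sub_cube_pos hw
  rw [linFactor_mul_quadFactor, cubeRootParam]
  field_simp
  ring

lemma integral_one_sub_div_cubeRootParam (hw : w < 1) :
    ∫ x in (0 : ℝ)..1, (1 - x) / (1 - cubeRootParam w * (x * (1 - x) ^ 2)) =
      (1 - w ^ 3) ^ 2 * ∫ x in (0 : ℝ)..1, (1 - x) / (linFactor w x * quadFactor w x) := by
  simp_rw [one_sub_cubeRootParam_mul hw, div_div_eq_mul_div]
  rw [← intervalIntegral.integral_const_mul]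
  congr! 2
  ring

/-- The closed form of the series at `cubeRootParam w`: a quadratic form in the real and imaginary
parts of `log (1 - ζ w)`, where `ζ³ = 1`. -/
noncomputable def cubeRootClosedForm (w : ℝ) : ℝ :=
  6 * cubeRootArg w ^ 2 - 1 / 2 * cubeRootLog w ^ 2

lemma hasDerivAt_cubeRootClosedForm (hw : w ∈ Ioo (-1) 1) :
    HasDerivAt cubeRootClosedForm
      (6 * √3 * (1 - w) / (1 - w ^ 3) * cubeRootArg w
        - 3 * (1 + w) / (1 - w ^ 3) * cubeRootLog w) w := by
  have hsub : 0 < 1 - w := sub_pos.2 hw.2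
  have hpos := one_add_add_sq_pos w
  convert! (((hasDerivAt_cubeRootArg (by linarith [hw.1])).pow 2).const_mul 6).sub
    (((hasDerivAt_cubeRootLog hw.2).pow 2).const_mul (1 / 2)) using 1
  rw [show 1 - w ^ 3 = (1 - w) * (1 + w + w ^ 2) by ring]
  field_simp
  ring

lemma hasDerivAt_chooseSeries_comp_cubeRootParam (hw₀ : -1 < w) (hw₁ : w ^ 3 < 3 - 2 * √2) :
    HasDerivAt (chooseSeries ∘ cubeRootParam)
      (6 * √3 * (1 - w) / (1 - w ^ 3) * cubeRootArg w
        - 3 * (1 + w) / (1 - w ^ 3) * cubeRootLog w) w := by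
  have hw : w ∈ Ioo (-1) 1 := ⟨hw₀, lt_one_of_cube_lt hw₁⟩
  have hcube := one_sub_cube_pos hw.2
  have hadd : 0 < 1 + w := by linarith
  convert! (hasDerivAt_chooseSeries (abs_cubeRootParam_lt hw₀ hw₁)).comp w
    (hasDerivAt_cubeRootParam hw.2) using 1
  rw [integral_one_sub_div_cubeRootParam hw.2]
  have hint := mul_integral_one_sub_div_factors hw
  generalize ∫ x in (0 : ℝ)..1, (1 - x) / (linFactor w x * quadFactor w x) = I at hint ⊢
  calc _ = -(2 * (1 + w) / (1 - w ^ 3)) *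
        (3 / 2 * cubeRootLog w - 3 * √3 * (1 - w) / (1 + w) * cubeRootArg w) := by
        field_simp
        ring
    _ = _ := by
        rw [← hint]
        field_simp
        ring

theorem chooseSeries_cubeRootParam (hw₀ : -1 < w) (hw₁ : w ^ 3 < 3 - 2 * √2) :
    chooseSeries (cubeRootParam w) = cubeRootClosedForm w := by
  let s : Set ℝ := {v | -1 < v ∧ v ^ 3 < 3 - 2 * √2}
  have hs_open : IsOpen s :=
    (isOpen_lt continuous_const continuous_id).inter
      (isOpen_lt (continuous_pow 3) continuous_const)
  have hs_preconnected : IsPreconnected s :=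
    OrdConnected.isPreconnected ⟨fun a ha b hb v hv ↦ ⟨ha.1.trans_le hv.1,
      ((Odd.strictMono_pow (by decide)).monotone hv.2).trans_lt hb.2⟩⟩
  have hseries : ∀ v ∈ s, HasDerivAt (chooseSeries ∘ cubeRootParam) _ v := fun v hv ↦
    hasDerivAt_chooseSeries_comp_cubeRootParam hv.1 hv.2
  have hclosed : ∀ v ∈ s, HasDerivAt cubeRootClosedForm _ v := fun v hv ↦
    hasDerivAt_cubeRootClosedForm ⟨hv.1, lt_one_of_cube_lt hv.2⟩
  have hzero_mem : (0 : ℝ) ∈ s := by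
    refine ⟨by norm_num, ?_⟩
    nlinarith [sq_sqrt (show (0 : ℝ) ≤ 2 by norm_num)]
  have hzero : (chooseSeries ∘ cubeRootParam) 0 = cubeRootClosedForm 0 := by
    simp [cubeRootParam, chooseSeries_zero, cubeRootClosedForm, cubeRootArg, cubeRootLog]
  exact hs_open.eqOn_of_deriv_eq hs_preconnected
    (fun v hv ↦ (hseries v hv).differentiableAt.differentiableWithinAt)
    (fun v hv ↦ (hclosed v hv).differentiableAt.differentiableWithinAt)
    (fun v hv ↦ (hseries v hv).deriv.trans (hclosed v hv).deriv.symm) hzero_mem hzero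
    (x := 0) ⟨hw₀, hw₁⟩

theorem stmt_6_general (hw₀ : -1 < w) (hw₁ : w ^ 3 < 3 - 2 * √2) :
    HasSum (fun k : ℕ ↦ (-(27 * w ^ 3 / (1 - w ^ 3) ^ 2)) ^ (k + 1) /
        ((k + 1 : ℝ) ^ 2 * ((3 * (k + 1)).choose (k + 1) : ℕ)))
      (6 * arctan (√3 * w / (2 + w)) ^ 2 - 1 / 2 * log ((1 + w + w ^ 2) / (1 - w) ^ 2) ^ 2) := by
  have hsum := (summable_pow_succ_div_sq_mul_choose (abs_cubeRootParam_lt hw₀ hw₁)).hasSum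
  rwa [← chooseSeries, chooseSeries_cubeRootParam hw₀ hw₁] at hsum

end Parametrisation

theorem stmt_6 :
    ∑' k : ℕ, (-(216/49) : ℝ)^(k+1) / (((k:ℝ)+1)^2 * (((3*(k+1)).choose (k+1) : ℕ) : ℝ)) =
    6*(Real.arctan (Real.sqrt 3/5))^2 - (1/2)*(Real.log 7)^2 := by
  have hcube : (1 / 2 : ℝ) ^ 3 < 3 - 2 * √2 := by
    nlinarith [sq_sqrt (show (0 : ℝ) ≤ 2 by norm_num)]
  have hsum := (stmt_6_general (w := 1 / 2) (by norm_num) hcube).tsum_eq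
  rwa [show (27 * (1 / 2) ^ 3 / (1 - (1 / 2) ^ 3) ^ 2 : ℝ) = 216 / 49 by norm_num,
    show √3 * (1 / 2) / (2 + 1 / 2) = √3 / 5 by ring,
    show ((1 + 1 / 2 + (1 / 2) ^ 2) / (1 - 1 / 2) ^ 2 : ℝ) = 7 by norm_num] at hsum
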